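/- arXiv:nlin/0208007 — 2 statements merged into one kernel-verified Lean document; each statement's English description precedes it below -/
import Mathlib

section
/- Let (Ω, μ) be a measure space, let q > 1 be a real number, let k ≥ 1, let λ_1,…,λ_k > 0 with λ_1 + ⋯ + λ_k = 1, and let f_1,…,f_k : Ω → ℝ be nonnegative measurable functions such that each f_i^q is integrable with respect to μ. If ∫_Ω (Σ_{i=1}^k λ_i f_i)^q dμ = Σ_{i=1}^k λ_i ∫_Ω f_i^q dμ, then f_i = f_j μ-almost everywhere for all i, j. (This is the strict-convexity equality case used to prove that a density operator minimizing the Rényi–Wehrl entropy must be a pure state: equality in the convexity inequality for the q-th moment of a mixture forces all components to have the same Husimi function almost everywhere.) -/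
open MeasureTheory

/-- The strict-convexity equality case for the `q`-th power: if the `q`-th moment of a convex
mixture of nonnegative functions equals the mixture of the `q`-th moments, then all components
coincide almost everywhere. This is the key step of the purity lemma for the Rényi–Wehrl
entropy. -/
theorem eq_ae_of_integral_rpow_mixture_eq {Ω : Type*} [MeasurableSpace Ω] (μ : Measure Ω)
    (q : ℝ) (hq : 1 < q) (k : ℕ) (hk : 1 ≤ k)
    (w : Fin k → ℝ) (hw : ∀ i, 0 < w i) (hw1 : ∑ i, w i = 1)
    (f : Fin k → Ω → ℝ) (hmeas : ∀ i, Measurable (f i)) (hpos : ∀ i ω, 0 ≤ f i ω)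
    (hint : ∀ i, Integrable (fun ω => f i ω ^ q) μ)
    (heq : ∫ ω, (∑ i, w i * f i ω) ^ q ∂μ = ∑ i, w i * ∫ ω, f i ω ^ q ∂μ) :
    ∀ i j, f i =ᵐ[μ] f j := by
  have hsc := strictConvexOn_rpow hq
  have hle : ∀ ω, (∑ i, w i * f i ω) ^ q ≤ ∑ i, w i * f i ω ^ q := by
    intro ω
    have := hsc.convexOn.map_sum_le (t := Finset.univ) (w := w) (p := fun i => f i ω)
      (fun i _ => (hw i).le) hw1 (fun i _ => hpos i ω)
    simpa only [smul_eq_mul] using this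
  have hn : ∀ ω, 0 ≤ ∑ i, w i * f i ω := fun ω =>
    Finset.sum_nonneg fun i _ => mul_nonneg (hw i).le (hpos i ω)
  have hR : Integrable (fun ω => ∑ i, w i * f i ω ^ q) μ :=
    integrable_finsetSum _ fun i _ => (hint i).const_mul (w i)
  have hm : Measurable (fun ω => (∑ i, w i * f i ω) ^ q) :=
    (Finset.measurable_fun_sum _ fun i _ => (hmeas i).const_mul (w i)).pow_const q
  have hL : Integrable (fun ω => (∑ i, w i * f i ω) ^ q) μ := by
    refine hR.mono' hm.aestronglyMeasurable (Filter.Eventually.of_forall fun ω => ?_)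
    rw [Real.norm_of_nonneg (Real.rpow_nonneg (hn ω) q)]
    exact hle ω
  have hRi : ∫ ω, ∑ i, w i * f i ω ^ q ∂μ = ∑ i, w i * ∫ ω, f i ω ^ q ∂μ := by
    rw [integral_finsetSum _ fun i _ => (hint i).const_mul (w i)]
    simp only [integral_const_mul]
  have hae := (integral_eq_iff_of_ae_le hL hR (Filter.Eventually.of_forall hle)).1
    (heq.trans hRi.symm)
  intro i j
  filter_upwards [hae] with ω hω
  refine hsc.eq_of_le_map_sum (t := Finset.univ) (w := w) (p := fun i => f i ω)
      (fun i _ => hw i) hw1 (fun i _ => hpos i ω) ?_ (Finset.mem_univ i) (Finset.mem_univ j)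
  simpa only [smul_eq_mul] using hω.ge
end

section
/- Let N ≥ 1 and m ≥ 1 be integers. Then the limit as q → 1 (q real, q ≠ 1) of (1/(1-q))·log( Γ(N+m)·Γ(qm+1) / (Γ(N+qm)·Γ(m+1)) ) equals m·(ψ(N+m) − ψ(m+1)). (This is the q → 1 limit of the minimal Rényi–Wehrl entropy S^{(q)}_min = (1/(1-q))·log(Γ(N+m)Γ(qm+1)/(Γ(N+qm)Γ(m+1))) for the symmetric representation [1^m] of SU(N), recovering the minimal Wehrl entropy of bosonic coherent states.) -/
open Filter

/-- The digamma function `ψ(x) = d/dx log Γ(x)`. -/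
noncomputable def digamma (x : ℝ) : ℝ := deriv (fun t => Real.log (Real.Gamma t)) x

theorem digamma_hasDerivAt {x : ℝ} (hx : 0 < x) :
    HasDerivAt (fun t => Real.log (Real.Gamma t)) (digamma x) x := by
  have h : DifferentiableAt ℝ Real.Gamma x := by
    refine Real.differentiableAt_Gamma (fun k => ?_)
    have : (0 : ℝ) ≤ k := Nat.cast_nonneg k
    intro h
    linarith
  exact (h.log (Real.Gamma_pos_of_pos hx).ne').hasDerivAt

/-- The `q → 1` limit of the minimal Rényi–Wehrl entropy
`S^{(q)}_min = (1/(1-q))·log(Γ(N+m)Γ(qm+1)/(Γ(N+qm)Γ(m+1)))` for the symmetric representation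
`[1^m]` of `SU(N)` is the minimal Wehrl entropy `m(ψ(N+m) − ψ(m+1))` of bosonic coherent
states. -/
theorem renyi_wehrl_min_limit_boson (N m : ℕ) (hN : 1 ≤ N) (hm : 1 ≤ m) :
    Tendsto (fun q : ℝ =>
        (1 / (1 - q)) * Real.log (Real.Gamma ((N : ℝ) + m) * Real.Gamma (q * m + 1) /
          (Real.Gamma ((N : ℝ) + q * m) * Real.Gamma ((m : ℝ) + 1))))
      (nhdsWithin 1 {(1 : ℝ)}ᶜ)
      (nhds ((m : ℝ) * (digamma ((N : ℝ) + m) - digamma ((m : ℝ) + 1)))) := by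
  have hN' : (1 : ℝ) ≤ N := by exact_mod_cast hN
  have hm' : (1 : ℝ) ≤ m := by exact_mod_cast hm
  have hl : HasDerivAt (fun q : ℝ => q * (m : ℝ)) (m : ℝ) 1 := by
    simpa using (hasDerivAt_id (1 : ℝ)).mul_const (m : ℝ)
  have d1 : HasDerivAt (fun q : ℝ => Real.log (Real.Gamma ((N : ℝ) + q * m)))
      (digamma ((N : ℝ) + m) * m) 1 := by
    have h := digamma_hasDerivAt (x := (N : ℝ) + 1 * m) (by linarith)
    have h2 := HasDerivAt.comp (1 : ℝ) h (hl.const_add (N : ℝ))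
    rw [one_mul] at h2
    exact h2
  have d2 : HasDerivAt (fun q : ℝ => Real.log (Real.Gamma (q * m + 1)))
      (digamma ((m : ℝ) + 1) * m) 1 := by
    have h := digamma_hasDerivAt (x := 1 * (m : ℝ) + 1) (by linarith)
    have h2 := HasDerivAt.comp (h := fun q : ℝ => q * (m : ℝ) + 1) (1 : ℝ) h (hl.add_const (1 : ℝ))
    rw [one_mul] at h2
    exact h2
  have ht := (d1.sub d2).tendsto_slope
  have e : (m : ℝ) * (digamma ((N : ℝ) + m) - digamma ((m : ℝ) + 1)) =
      digamma ((N : ℝ) + m) * m - digamma ((m : ℝ) + 1) * m := by ring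
  rw [e]
  refine ht.congr' ?_
  have hpos : ∀ᶠ q : ℝ in nhdsWithin 1 {(1 : ℝ)}ᶜ, 0 < q :=
    mem_nhdsWithin_of_mem_nhds (Ioi_mem_nhds one_pos)
  filter_upwards [hpos, self_mem_nhdsWithin] with q hq hq1
  have hq1' : q ≠ 1 := hq1
  have hqm : 0 < q * (m : ℝ) := by positivity
  have g1 := (Real.Gamma_pos_of_pos (show 0 < (N : ℝ) + m by linarith)).ne'
  have g2 := (Real.Gamma_pos_of_pos (show 0 < q * (m : ℝ) + 1 by linarith)).ne'
  have g3 := (Real.Gamma_pos_of_pos (show 0 < (N : ℝ) + q * m by linarith)).ne'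
  have g4 := (Real.Gamma_pos_of_pos (show 0 < (m : ℝ) + 1 by linarith)).ne'
  rw [Real.log_div (mul_ne_zero g1 g2) (mul_ne_zero g3 g4), Real.log_mul g1 g2,
    Real.log_mul g3 g4, slope_def_field]
  simp only [Pi.sub_apply, one_mul]
  have a1 : q - 1 ≠ 0 := sub_ne_zero.mpr hq1'
  have a2 : 1 - q ≠ 0 := sub_ne_zero.mpr hq1'.symm
  rw [one_div, inv_mul_eq_div, div_eq_div_iff a1 a2]
  ring
end
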